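/- (1) The ideal 𝒥_F absorbs the shifted product: if P ∈ 𝒥_F and Q ∈ ℂ⟨A⟩, then both P ⋆ Q and Q ⋆ P lie in 𝒥_F; consequently ⋆ induces a well-defined bilinear product on the fusion algebra ℱ = ℂ⟨A⟩/𝒥_F. (2) If P, Q ∈ 𝐹̃ then P ⋆ Q ∈ 𝐹̃. -/

import Mathlib

inductive Brk : Type
  | lt  -- ⟨
  | gt  -- ⟩
deriving DecidableEq

/-- finite sequences of pairs of positive integers -/
abbrev PSeq := List (ℕ+ × ℕ+)

/-- the alphabet 𝒜: red letters `a_{•γ}` and blue letters `a_{γ◇}` -/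
inductive FLetter : Type
  | red (b : Brk) (γ : PSeq)
  | blue (γ : PSeq) (d : Brk)
deriving DecidableEq

/-- the free associative algebra ℂ⟨𝒜⟩ -/
abbrev FreeA := FreeAlgebra ℂ FLetter

noncomputable def ιA (e : FLetter) : FreeA := FreeAlgebra.ι ℂ e

noncomputable def wordProd (l : List FLetter) : FreeA := (l.map ιA).prod

/-- the letters of `𝒜_{⟨ ⟩}` -/
def IsCentral : FLetter → Prop
  | .red .lt _ => True
  | .blue _ .gt => True
  | _ => False

/-- the generating relations of the ideal 𝒥_F -/
inductive FRel : FreeA → FreeA → Prop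
  | central (e f : FLetter) (he : IsCentral e) :
      FRel (ιA e * ιA f) (ιA f * ιA e)
  | red_comm (b b' : Brk) (γ γ' : PSeq) :
      FRel (ιA (.red b γ) * ιA (.red b' γ')) (ιA (.red b' γ') * ιA (.red b γ))
  | blue_comm (d d' : Brk) (γ γ' : PSeq) :
      FRel (ιA (.blue γ d) * ιA (.blue γ' d')) (ιA (.blue γ' d') * ιA (.blue γ d))
  | fusion (b d : Brk) (α β : PSeq) (v x : List FLetter) :
      FRel (ιA (.red b α) * wordProd v * ιA (.blue α .lt) * ιA (.red .gt β) *
              wordProd x * ιA (.blue β d))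
           (ιA (.red b α) * wordProd v * ιA (.red .gt β) * ιA (.blue α .lt) *
              wordProd x * ιA (.blue β d)
             + ιA (.red b (α ++ β)) * wordProd v * wordProd x * ιA (.blue (α ++ β) d))

/-- the fusion algebra ℱ = ℂ⟨𝒜⟩/𝒥_F -/
abbrev FA := RingQuot FRel

noncomputable def mkF : FreeA →ₐ[ℂ] FA := RingQuot.mkAlgHom ℂ FRel

/-- the red letter `a_{•γ}` in ℱ -/
noncomputable def Rl (b : Brk) (γ : PSeq) : FA := mkF (ιA (.red b γ))

/-- the blue letter `a_{γ◇}` in ℱ -/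
noncomputable def Bll (γ : PSeq) (d : Brk) : FA := mkF (ιA (.blue γ d))

def FLetter.seq : FLetter → PSeq
  | .red _ γ => γ
  | .blue γ _ => γ

/-- `|a| = max_ℓ i_ℓ` for a letter with sequence `γ` -/
def seqSize (γ : PSeq) : ℕ := (γ.map fun p => (p.1 : ℕ)).foldr max 0

/-- `ω(a) = max_ℓ j_ℓ` for a letter with sequence `γ` -/
def seqOmega (γ : PSeq) : ℕ := (γ.map fun p => (p.2 : ℕ)).foldr max 0

def wordSize (l : List FLetter) : ℕ := (l.map fun e => seqSize e.seq).foldr max 0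

def wordOmega (l : List FLetter) : ℕ := (l.map fun e => seqOmega e.seq).foldr max 0

def addP (a : ℕ+) (m : ℕ) : ℕ+ := ⟨a.1 + m, Nat.add_pos_left a.2 m⟩

/-- the shift of a sequence by `(m, n)` -/
def shiftSeq (m n : ℕ) (γ : PSeq) : PSeq := γ.map fun p => (addP p.1 m, addP p.2 n)

/-- the shift of a letter by `(m, n)` -/
def FLetter.shift (m n : ℕ) : FLetter → FLetter
  | .red b γ => .red b (shiftSeq m n γ)
  | .blue γ d => .blue (shiftSeq m n γ) d

/-- the shifted product ⋆ on ℂ⟨𝒜⟩ -/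
noncomputable def starF : FreeA →ₗ[ℂ] FreeA →ₗ[ℂ] FreeA :=
  (FreeAlgebra.basisFreeMonoid ℂ FLetter).constr ℂ fun u =>
    (FreeAlgebra.basisFreeMonoid ℂ FLetter).constr ℂ fun v =>
      wordProd (FreeMonoid.toList u ++
        (FreeMonoid.toList v).map
          (FLetter.shift (wordSize (FreeMonoid.toList u)) (wordOmega (FreeMonoid.toList u))))

/-- the two-sided ideal 𝒥_F of ℂ⟨𝒜⟩ -/
noncomputable def JF : TwoSidedIdeal FreeA :=
  TwoSidedIdeal.span {z : FreeA | ∃ x y : FreeA, FRel x y ∧ z = x - y}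

/-- the subspace 𝐹̃ of ℱ spanned by the classes of the words
`a_{•₁α₁}⋯a_{•ₖαₖ}·a_{α₁◇₁}⋯a_{αₖ◇ₖ}` -/
noncomputable def Ftilde : Submodule ℂ FA :=
  Submodule.span ℂ
    {x : FA | ∃ (k : ℕ) (bs ds : Fin k → Brk) (seqs : Fin k → PSeq),
      x = ((List.finRange k).map fun i => Rl (bs i) (seqs i)).prod *
            ((List.finRange k).map fun i => Bll (seqs i) (ds i)).prod}

/-!
For a word `u` one has `u ⋆ Q = u · (shift of Q by (|u|, ω(u)))`, and shifting preserves the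
generating relations; this gives absorption on the right. For absorption on the left, both sides of
each generating relation are combinations of words with the same `(|·|, ω(·))`, so `𝒥_F` is spanned
by elements `P` all of whose words have a common weight, and `P ⋆ Q = P · (shift of Q)` for these.

For `𝐹̃`, it is enough to show that it is a subalgebra of `ℱ`, since it is invariant under shifts.
Wrapping an element of `𝐹̃` in an arc, `z ↦ a_{•α} z a_{α◇}`, stays in `𝐹̃`, and every spanning
element is obtained from `1` by such wrappings. So it suffices to move a red letter `a_{•β}` to the
left through the blue letters `a_{α⟨}` of an element of `𝐹̃`: each move produces at most one fusion
term, in which the arcs `α` and `β` are replaced by a single outer arc `αβ`, with fewer letters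
left to cross.
-/

section GeneralAlgebra

theorem foldr_max_append {α : Type*} [LinearOrder α] [OrderBot α] (s t : List α) :
    (s ++ t).foldr max ⊥ = max (s.foldr max ⊥) (t.foldr max ⊥) := by
  rw [List.foldr_append, ← List.foldr_assoc (op := max), max_eq_right bot_le]

theorem mkAlgHom_eq_zero_iff_mem_span {S A : Type*} [CommSemiring S] [Ring A] [Algebra S A]
    {r : A → A → Prop} {z : A} :
    RingQuot.mkAlgHom S r z = 0 ↔
      z ∈ TwoSidedIdeal.span {z : A | ∃ x y : A, r x y ∧ z = x - y} := by
  set I := TwoSidedIdeal.span {z : A | ∃ x y : A, r x y ∧ z = x - y} with hI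
  constructor
  · intro hz
    have hr : ∀ ⦃x y : A⦄, r x y → I.ringCon.mk' x = I.ringCon.mk' y := fun x y hxy =>
      (RingCon.eq _).2 ((I.rel_iff _ _).2 (TwoSidedIdeal.subset_span ⟨x, y, hxy, rfl⟩))
    rw [← I.ker_ringCon_mk', TwoSidedIdeal.mem_ker, ← RingQuot.lift_mkRingHom_apply _ hr,
      ← RingQuot.mkAlgHom_coe S r, RingHom.coe_coe, hz, map_zero]
  · have hle : I ≤ TwoSidedIdeal.ker (RingQuot.mkAlgHom S r) := by
      rw [hI, TwoSidedIdeal.span_le]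
      rintro _ ⟨x, y, hxy, rfl⟩
      exact (TwoSidedIdeal.mem_ker _).2 (by rw [map_sub, RingQuot.mkAlgHom_rel S hxy, sub_self])
    exact fun hz => (TwoSidedIdeal.mem_ker _).1 (hle hz)

theorem exists_bilinear_factor_of_surjective {R M N P : Type*} [CommRing R] [AddCommGroup M]
    [AddCommGroup N] [AddCommGroup P] [Module R M] [Module R N] [Module R P] {π : M →ₗ[R] N}
    (hπ : Function.Surjective π) (f : M →ₗ[R] M →ₗ[R] P)
    (hleft : ∀ u ∈ LinearMap.ker π, ∀ v, f u v = 0)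
    (hright : ∀ v ∈ LinearMap.ker π, ∀ u, f u v = 0) :
    ∃ g : N →ₗ[R] N →ₗ[R] P, ∀ u v, g (π u) (π v) = f u v := by
  let e := π.quotKerEquivOfSurjective hπ
  refine ⟨(f.liftQ₂ (LinearMap.ker π) (LinearMap.ker π)
      (fun u hu => LinearMap.ext (hleft u hu))
      (fun v hv => LinearMap.ext (hright v hv))).compl₁₂ e.symm.toLinearMap e.symm.toLinearMap,
    fun u v => ?_⟩
  simp only [e, LinearMap.compl₁₂_apply, LinearEquiv.coe_coe,
    LinearMap.quotKerEquivOfSurjective_symm_apply]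
  exact LinearMap.liftQ₂_mk _ _ u v

end GeneralAlgebra

section Words

theorem wordProd_nil : wordProd [] = 1 := rfl

theorem wordProd_cons (e : FLetter) (l : List FLetter) :
    wordProd (e :: l) = ιA e * wordProd l :=
  List.prod_cons

theorem wordProd_append (u v : List FLetter) : wordProd (u ++ v) = wordProd u * wordProd v := by
  simp only [wordProd, List.map_append, List.prod_append]

theorem basisFreeMonoid_eq_wordProd (u : FreeMonoid FLetter) :
    FreeAlgebra.basisFreeMonoid ℂ FLetter u = wordProd (FreeMonoid.toList u) := by
  simp only [FreeAlgebra.basisFreeMonoid, FreeAlgebra.equivMonoidAlgebraFreeMonoid,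
    MonoidAlgebra.of_apply, LinearEquiv.trans_symm, Module.Basis.map_apply,
    Finsupp.coe_basisSingleOne, LinearEquiv.trans_apply, MonoidAlgebra.coeffLinearEquiv_symm_apply,
    MonoidAlgebra.ofCoeff_single, AlgEquiv.coe_symm_toLinearEquiv, AlgEquiv.ofAlgHom_symm_apply,
    MonoidAlgebra.lift_single, FreeMonoid.lift_apply, one_smul]
  rfl

theorem span_range_wordProd : Submodule.span ℂ (Set.range wordProd) = ⊤ := by
  rw [← (FreeAlgebra.basisFreeMonoid ℂ FLetter).span_eq,
    ← FreeMonoid.toList.surjective.range_comp wordProd]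
  exact congrArg _ (congrArg _ (funext fun u => (basisFreeMonoid_eq_wordProd u).symm))

theorem linearMap_ext_wordProd {M : Type*} [AddCommMonoid M] [Module ℂ M] {f g : FreeA →ₗ[ℂ] M}
    (h : ∀ l, f (wordProd l) = g (wordProd l)) : f = g :=
  LinearMap.ext_on_range span_range_wordProd h

theorem starF_wordProd_wordProd (u v : List FLetter) :
    starF (wordProd u) (wordProd v) =
      wordProd (u ++ v.map (FLetter.shift (wordSize u) (wordOmega u))) := by
  have hword (l : List FLetter) :
      wordProd l = FreeAlgebra.basisFreeMonoid ℂ FLetter (FreeMonoid.ofList l) := by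
    rw [basisFreeMonoid_eq_wordProd, FreeMonoid.toList_ofList]
  rw [hword u, hword v, starF, Module.Basis.constr_basis, Module.Basis.constr_basis,
    FreeMonoid.toList_ofList, FreeMonoid.toList_ofList]

end Words

section Weight

/-- The pair `(max i, max j)` of a sequence of pairs `(i, j)`; pairs of weights are joined
componentwise, so that `⊔` on `ℕ × ℕ` treats `|·|` and `ω(·)` at once. -/
def seqWeight (γ : PSeq) : ℕ × ℕ := (seqSize γ, seqOmega γ)

/-- The pair `(|l|, ω(l))` of a word `l`. -/
def wordWeight (l : List FLetter) : ℕ × ℕ := (wordSize l, wordOmega l)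

theorem seqWeight_append (α β : PSeq) : seqWeight (α ++ β) = seqWeight α ⊔ seqWeight β := by
  simp only [seqWeight, seqSize, seqOmega, List.map_append, ← bot_eq_zero, foldr_max_append,
    Prod.mk_sup_mk]

theorem wordWeight_append (u v : List FLetter) :
    wordWeight (u ++ v) = wordWeight u ⊔ wordWeight v := by
  simp only [wordWeight, wordSize, wordOmega, List.map_append, ← bot_eq_zero, foldr_max_append,
    Prod.mk_sup_mk]

theorem wordWeight_singleton (e : FLetter) : wordWeight [e] = seqWeight e.seq := by
  simp [wordWeight, wordSize, wordOmega, seqWeight]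

/-- The combinations of words of weight exactly `p`. -/
def homogeneous (p : ℕ × ℕ) : Submodule ℂ FreeA :=
  Submodule.span ℂ (wordProd '' {l | wordWeight l = p})

theorem wordProd_mem_homogeneous (l : List FLetter) : wordProd l ∈ homogeneous (wordWeight l) :=
  Submodule.subset_span ⟨l, rfl, rfl⟩

theorem ιA_mem_homogeneous (e : FLetter) : ιA e ∈ homogeneous (seqWeight e.seq) := by
  simpa only [wordWeight_singleton, wordProd_cons, wordProd_nil, mul_one]
    using wordProd_mem_homogeneous [e]

theorem mul_mem_homogeneous {p q : ℕ × ℕ} {x y : FreeA} (hx : x ∈ homogeneous p)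
    (hy : y ∈ homogeneous q) : x * y ∈ homogeneous (p ⊔ q) := by
  have hxy : x * y ∈ homogeneous p * homogeneous q := Submodule.mul_mem_mul hx hy
  rw [homogeneous, homogeneous, Submodule.span_mul_span] at hxy
  refine Submodule.span_mono ?_ hxy
  rintro _ ⟨_, ⟨u, rfl, rfl⟩, _, ⟨v, rfl, rfl⟩, rfl⟩
  exact ⟨u ++ v, wordWeight_append u v, wordProd_append u v⟩

theorem FRel.exists_mem_homogeneous {x y : FreeA} (h : FRel x y) :
    ∃ p, x ∈ homogeneous p ∧ y ∈ homogeneous p := by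
  have hswap (e f : FLetter) : ∃ p, ιA e * ιA f ∈ homogeneous p ∧ ιA f * ιA e ∈ homogeneous p :=
    ⟨_, mul_mem_homogeneous (ιA_mem_homogeneous e) (ιA_mem_homogeneous f),
      sup_comm (seqWeight f.seq) _ ▸
        mul_mem_homogeneous (ιA_mem_homogeneous f) (ιA_mem_homogeneous e)⟩
  cases h with
  | central e f => exact hswap e f
  | red_comm => exact hswap _ _
  | blue_comm => exact hswap _ _
  | fusion b d α β v x =>
    have hfour (e₁ e₂ e₃ e₄ : FLetter) :=
      mul_mem_homogeneous (mul_mem_homogeneous (mul_mem_homogeneous (mul_mem_homogeneous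
        (mul_mem_homogeneous (ιA_mem_homogeneous e₁) (wordProd_mem_homogeneous v))
        (ιA_mem_homogeneous e₂)) (ιA_mem_homogeneous e₃)) (wordProd_mem_homogeneous x))
        (ιA_mem_homogeneous e₄)
    have htwo (e₁ e₂ : FLetter) :=
      mul_mem_homogeneous (mul_mem_homogeneous (mul_mem_homogeneous
        (ιA_mem_homogeneous e₁) (wordProd_mem_homogeneous v)) (wordProd_mem_homogeneous x))
        (ιA_mem_homogeneous e₂)
    refine ⟨seqWeight α ⊔ seqWeight β ⊔ wordWeight v ⊔ wordWeight x, ?_, add_mem ?_ ?_⟩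
    · convert hfour (.red b α) (.blue α .lt) (.red .gt β) (.blue β d) using 2
      simp only [FLetter.seq, sup_comm, sup_left_comm, sup_left_idem]
    · convert hfour (.red b α) (.red .gt β) (.blue α .lt) (.blue β d) using 2
      simp only [FLetter.seq, sup_comm, sup_left_comm, sup_left_idem]
    · convert htwo (.red b (α ++ β)) (.blue (α ++ β) d) using 2
      simp only [FLetter.seq, seqWeight_append, sup_comm, sup_left_comm, sup_left_idem]

end Weight

section ShiftedProduct

/-- The algebra endomorphism of `ℂ⟨𝒜⟩` shifting every letter by the pair `p`. -/
noncomputable def shiftHom (p : ℕ × ℕ) : FreeA →ₐ[ℂ] FreeA :=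
  FreeAlgebra.lift ℂ fun e => ιA (e.shift p.1 p.2)

theorem shiftHom_ιA (p : ℕ × ℕ) (e : FLetter) : shiftHom p (ιA e) = ιA (e.shift p.1 p.2) :=
  FreeAlgebra.lift_ι_apply _ e

theorem shiftHom_wordProd (p : ℕ × ℕ) (l : List FLetter) :
    shiftHom p (wordProd l) = wordProd (l.map (FLetter.shift p.1 p.2)) := by
  simp only [wordProd, map_list_prod, List.map_map, Function.comp_def, shiftHom_ιA]

theorem starF_wordProd (u : List FLetter) (Q : FreeA) :
    starF (wordProd u) Q = wordProd u * shiftHom (wordWeight u) Q := by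
  have hmaps : starF (wordProd u) =
      (LinearMap.mulLeft ℂ (wordProd u)).comp (shiftHom (wordWeight u)).toLinearMap :=
    linearMap_ext_wordProd fun v => by
      rw [starF_wordProd_wordProd, wordProd_append]
      exact congrArg _ (shiftHom_wordProd (wordWeight u) v).symm
  exact LinearMap.congr_fun hmaps Q

theorem starF_of_mem_homogeneous {p : ℕ × ℕ} {P : FreeA} (hP : P ∈ homogeneous p) (Q : FreeA) :
    starF P Q = P * shiftHom p Q := by
  have hmaps : Set.EqOn (starF.flip Q) (LinearMap.mulRight ℂ (shiftHom p Q))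
      (wordProd '' {l | wordWeight l = p}) := by
    rintro _ ⟨u, rfl, rfl⟩
    exact starF_wordProd u Q
  exact LinearMap.eqOn_span hmaps hP

theorem IsCentral.shift {e : FLetter} (he : IsCentral e) (m n : ℕ) : IsCentral (e.shift m n) := by
  rcases e with ⟨_ | _, γ⟩ | ⟨γ, _ | _⟩ <;> exact he

theorem shiftSeq_append (m n : ℕ) (α β : PSeq) :
    shiftSeq m n (α ++ β) = shiftSeq m n α ++ shiftSeq m n β :=
  List.map_append

theorem FRel.shiftHom (p : ℕ × ℕ) {x y : FreeA} (h : FRel x y) :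
    FRel (shiftHom p x) (shiftHom p y) := by
  cases h <;> simp only [map_mul, map_add, shiftHom_ιA, shiftHom_wordProd, FLetter.shift,
    shiftSeq_append]
  case central e f he => exact .central _ _ (he.shift _ _)
  case red_comm => exact .red_comm _ _ _ _
  case blue_comm => exact .blue_comm _ _ _ _
  case fusion => exact .fusion _ _ _ _ _ _

theorem sub_mem_JF {x y : FreeA} (h : FRel x y) : x - y ∈ JF :=
  TwoSidedIdeal.subset_span ⟨x, y, h, rfl⟩

theorem mem_JF_iff {P : FreeA} : P ∈ JF ↔ mkF P = 0 :=
  mkAlgHom_eq_zero_iff_mem_span.symm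

theorem shiftHom_mem_JF (p : ℕ × ℕ) {P : FreeA} (hP : P ∈ JF) : shiftHom p P ∈ JF := by
  have hle : JF ≤ TwoSidedIdeal.comap (shiftHom p) JF := by
    refine TwoSidedIdeal.span_le.2 ?_
    rintro _ ⟨x, y, hxy, rfl⟩
    refine (TwoSidedIdeal.mem_comap _).2 ?_
    rw [map_sub]
    exact sub_mem_JF (hxy.shiftHom p)
  exact (TwoSidedIdeal.mem_comap _).1 (hle hP)

open scoped Pointwise in
theorem mem_span_homogeneous_of_mem_JF {P : FreeA} (hP : P ∈ JF) :
    P ∈ Submodule.span ℂ {z | z ∈ JF ∧ ∃ p, z ∈ homogeneous p} := by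
  rw [JF, TwoSidedIdeal.mem_span_iff_mem_addSubgroup_closure] at hP
  induction hP using AddSubgroup.closure_induction with
  | zero => exact zero_mem _
  | add P Q _ _ hP hQ => exact add_mem hP hQ
  | neg P _ hP => exact neg_mem hP
  | mem z hz =>
    obtain ⟨_, ⟨a, -, _, ⟨x, y, hxy, rfl⟩, rfl⟩, b, -, rfl⟩ := hz
    obtain ⟨p, hx, hy⟩ := hxy.exists_mem_homogeneous
    have hmem : a * (x - y) * b ∈
        Submodule.span ℂ (Set.range wordProd * {x - y} * Set.range wordProd) := by
      rw [← Submodule.span_mul_span, ← Submodule.span_mul_span, span_range_wordProd]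
      exact Submodule.mul_mem_mul (Submodule.mul_mem_mul Submodule.mem_top
        (Submodule.mem_span_singleton_self _)) Submodule.mem_top
    refine Submodule.span_mono ?_ hmem
    rintro _ ⟨_, ⟨_, ⟨u, rfl⟩, _, rfl, rfl⟩, _, ⟨w, rfl⟩, rfl⟩
    exact ⟨JF.mul_mem_right _ _ (JF.mul_mem_left _ _ (sub_mem_JF hxy)), _,
      mul_mem_homogeneous (mul_mem_homogeneous (wordProd_mem_homogeneous u)
        (Submodule.sub_mem _ hx hy)) (wordProd_mem_homogeneous w)⟩

theorem starF_mem_JF_of_left {P : FreeA} (hP : P ∈ JF) (Q : FreeA) : starF P Q ∈ JF := by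
  have hle : Submodule.span ℂ {z | z ∈ JF ∧ ∃ p, z ∈ homogeneous p} ≤
      LinearMap.ker (mkF.toLinearMap.comp (starF.flip Q)) := by
    refine Submodule.span_le.2 ?_
    rintro z ⟨hz, p, hzp⟩
    refine mem_JF_iff.1 ?_
    rw [LinearMap.flip_apply, starF_of_mem_homogeneous hzp]
    exact JF.mul_mem_right _ _ hz
  exact mem_JF_iff.2 (hle (mem_span_homogeneous_of_mem_JF hP))

theorem starF_mem_JF_of_right {Q : FreeA} (hQ : Q ∈ JF) (P : FreeA) : starF P Q ∈ JF := by
  have hmaps : mkF.toLinearMap.comp (starF.flip Q) = 0 := linearMap_ext_wordProd fun u => by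
    refine mem_JF_iff.1 ?_
    rw [LinearMap.flip_apply, starF_wordProd]
    exact JF.mul_mem_left _ _ (shiftHom_mem_JF _ hQ)
  exact mem_JF_iff.2 (LinearMap.congr_fun hmaps P)

theorem mkF_surjective : Function.Surjective mkF :=
  RingQuot.mkAlgHom_surjective ℂ FRel

theorem exists_shiftedProduct_FA : ∃ mstar : FA →ₗ[ℂ] FA →ₗ[ℂ] FA,
    ∀ u v : FreeA, mstar (mkF u) (mkF v) = mkF (starF u v) :=
  exists_bilinear_factor_of_surjective (π := mkF.toLinearMap) mkF_surjective
    (starF.compr₂ mkF.toLinearMap)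
    (fun _ hu v => mem_JF_iff.1 (starF_mem_JF_of_left (mem_JF_iff.2 hu) v))
    (fun _ hv u => mem_JF_iff.1 (starF_mem_JF_of_right (mem_JF_iff.2 hv) u))

end ShiftedProduct

section FusionAlgebra

theorem mkF_eq_of_FRel {x y : FreeA} (h : FRel x y) : mkF x = mkF y :=
  RingQuot.mkAlgHom_rel ℂ h

theorem commute_Rl_Rl (b b' : Brk) (γ γ' : PSeq) : Commute (Rl b γ) (Rl b' γ') := by
  simpa only [map_mul, Commute, SemiconjBy, Rl, Bll] using mkF_eq_of_FRel (.red_comm b b' γ γ')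

theorem commute_Bll_Bll (d d' : Brk) (γ γ' : PSeq) : Commute (Bll γ d) (Bll γ' d') := by
  simpa only [map_mul, Commute, SemiconjBy, Rl, Bll] using mkF_eq_of_FRel (.blue_comm d d' γ γ')

theorem commute_Bll_gt_Rl (b : Brk) (γ γ' : PSeq) : Commute (Bll γ .gt) (Rl b γ') := by
  simpa only [map_mul, Commute, SemiconjBy, Rl, Bll] using
    mkF_eq_of_FRel (.central (.blue γ .gt) (.red b γ') trivial)

theorem commute_Bll_Rl_lt (d : Brk) (γ γ' : PSeq) : Commute (Bll γ d) (Rl .lt γ') := by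
  simpa only [map_mul, Commute, SemiconjBy, Rl, Bll] using
    (mkF_eq_of_FRel (.central (.red .lt γ') (.blue γ d) trivial)).symm

theorem mem_span_mkF_wordProd (z : FA) :
    z ∈ Submodule.span ℂ (Set.range fun l => mkF (wordProd l)) := by
  have hmap : Submodule.span ℂ (mkF '' Set.range wordProd) =
      (Submodule.span ℂ (Set.range wordProd)).map mkF.toLinearMap :=
    Submodule.span_image mkF.toLinearMap
  rw [Set.range_comp' mkF wordProd, hmap, span_range_wordProd, Submodule.map_top]
  exact mkF_surjective z

theorem fusion_FA (b d : Brk) (α β : PSeq) (v x : FA) :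
    Rl b α * v * Bll α .lt * Rl .gt β * x * Bll β d =
      Rl b α * v * Rl .gt β * Bll α .lt * x * Bll β d +
        Rl b (α ++ β) * v * x * Bll (α ++ β) d := by
  induction mem_span_mkF_wordProd v using Submodule.span_induction with
  | zero => simp only [mul_zero, zero_mul, add_zero]
  | add v v' _ _ hv hv' => simp only [mul_add, add_mul, hv, hv']; abel
  | smul c v _ hv => simp only [mul_smul_comm, smul_mul_assoc, hv, smul_add]
  | mem v hv =>
    obtain ⟨v, rfl⟩ := hv
    induction mem_span_mkF_wordProd x using Submodule.span_induction with
    | zero => simp only [mul_zero, zero_mul, add_zero]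
    | add x x' _ _ hx hx' => simp only [mul_add, add_mul, hx, hx']; abel
    | smul c x _ hx => simp only [mul_smul_comm, smul_mul_assoc, hx, smul_add]
    | mem x hx =>
      obtain ⟨x, rfl⟩ := hx
      simpa only [map_mul, map_add, Rl, Bll] using mkF_eq_of_FRel (.fusion b d α β v x)

end FusionAlgebra

section Arcs

/-- A red letter `a_{•γ}` together with a blue letter `a_{γ◇}` carrying the same sequence: `left`
is `•`, `seq` is `γ` and `right` is `◇`. -/
structure Arc where
  left : Brk
  seq : PSeq
  right : Brk

namespace Arc

/-- The class of the red letter of an arc. -/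
noncomputable def red (a : Arc) : FA := Rl a.left a.seq

/-- The class of the blue letter of an arc. -/
noncomputable def blue (a : Arc) : FA := Bll a.seq a.right

/-- The outer arc created when the blue letter of `c` fuses with the red letter of `a`. -/
def fuse (c a : Arc) : Arc := ⟨c.left, c.seq ++ a.seq, a.right⟩

theorem exists_blue_mul_red_eq (c a : Arc) :
    ∃ ε : ℂ, ∀ v x : FA, c.red * v * c.blue * a.red * x * a.blue =
      c.red * v * a.red * c.blue * x * a.blue + ε • ((c.fuse a).red * v * x * (c.fuse a).blue) := by
  have hcomm (h : Commute c.blue a.red) : ∃ ε : ℂ, ∀ v x : FA,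
      c.red * v * c.blue * a.red * x * a.blue =
        c.red * v * a.red * c.blue * x * a.blue +
          ε • ((c.fuse a).red * v * x * (c.fuse a).blue) :=
    ⟨0, fun v x => by rw [zero_smul, add_zero, mul_assoc _ c.blue, h.eq, ← mul_assoc]⟩
  obtain ⟨b, α, _ | _⟩ := c
  · obtain ⟨_ | _, β, d⟩ := a
    · exact hcomm (commute_Bll_Rl_lt _ _ _)
    · exact ⟨1, fun v x => by rw [one_smul]; exact fusion_FA b d α β v x⟩
  · exact hcomm (commute_Bll_gt_Rl _ _ _)

end Arc

/-- The product in `ℱ` of the red letters of a list of arcs. -/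
noncomputable def redProd (L : List Arc) : FA := (L.map Arc.red).prod

/-- The product in `ℱ` of the blue letters of a list of arcs. -/
noncomputable def blueProd (L : List Arc) : FA := (L.map Arc.blue).prod

theorem redProd_nil : redProd [] = 1 := rfl

theorem blueProd_nil : blueProd [] = 1 := rfl

theorem redProd_cons (a : Arc) (L : List Arc) : redProd (a :: L) = a.red * redProd L :=
  List.prod_cons

theorem blueProd_cons (a : Arc) (L : List Arc) : blueProd (a :: L) = a.blue * blueProd L :=
  List.prod_cons

theorem commute_red_redProd (a : Arc) (L : List Arc) : Commute a.red (redProd L) :=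
  Commute.list_prod_right _ _ <| List.forall_mem_map.2 fun _ _ => commute_Rl_Rl _ _ _ _

theorem commute_blue_blueProd (a : Arc) (L : List Arc) : Commute a.blue (blueProd L) :=
  Commute.list_prod_right _ _ <| List.forall_mem_map.2 fun _ _ => commute_Bll_Bll _ _ _ _

/-- The product of the red letters of a list of arcs followed by their blue letters, in the same
order; these are the spanning elements of `𝐹̃`. -/
noncomputable def arcProd (L : List Arc) : FA := redProd L * blueProd L

theorem arcProd_nil : arcProd [] = 1 := mul_one _

theorem arcProd_cons (a : Arc) (L : List Arc) :
    arcProd (a :: L) = a.red * arcProd L * a.blue := by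
  rw [arcProd, arcProd, redProd_cons, blueProd_cons, (commute_blue_blueProd a L).eq]
  simp only [mul_assoc]

theorem Ftilde_eq_span_range : Ftilde = Submodule.span ℂ (Set.range arcProd) := by
  refine congrArg (Submodule.span ℂ) (Set.ext fun x => ⟨?_, ?_⟩)
  · rintro ⟨k, bs, ds, seqs, rfl⟩
    refine ⟨(List.finRange k).map fun i => ⟨bs i, seqs i, ds i⟩, ?_⟩
    simp only [arcProd, redProd, blueProd, List.map_map]
    rfl
  · rintro ⟨L, rfl⟩
    have hget {f : Arc → FA} : L.map f = (List.finRange L.length).map fun i => f (L.get i) := by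
      conv_lhs => rw [← List.map_get_finRange L, List.map_map]
      rfl
    exact ⟨L.length, fun i => (L.get i).left, fun i => (L.get i).right, fun i => (L.get i).seq,
      by simp only [arcProd, redProd, blueProd, hget, Arc.red, Arc.blue]⟩

theorem arcProd_mem_Ftilde (L : List Arc) : arcProd L ∈ Ftilde :=
  Ftilde_eq_span_range ▸ Submodule.subset_span ⟨L, rfl⟩

theorem map_mem_of_mem_Ftilde {M : Type*} [AddCommGroup M] [Module ℂ M] {N : Submodule ℂ M}
    (f : FA →ₗ[ℂ] M) (hf : ∀ L, f (arcProd L) ∈ N) {x : FA} (hx : x ∈ Ftilde) : f x ∈ N := by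
  rw [Ftilde_eq_span_range] at hx
  exact (Submodule.span_le (p := N.comap f)).2 (Set.range_subset_iff.2 hf) hx

theorem red_mul_mul_blue_mem_Ftilde (a : Arc) {x : FA} (hx : x ∈ Ftilde) :
    a.red * x * a.blue ∈ Ftilde :=
  map_mem_of_mem_Ftilde (LinearMap.mulLeftRight ℂ (a.red, a.blue)) (fun L => by
    rw [LinearMap.mulLeftRight_apply, ← arcProd_cons]
    exact arcProd_mem_Ftilde _) hx

theorem redProd_mul_mul_blueProd_mem_Ftilde (L : List Arc) {x : FA} (hx : x ∈ Ftilde) :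
    redProd L * x * blueProd L ∈ Ftilde := by
  induction L with
  | nil => simpa only [redProd_nil, blueProd_nil, one_mul, mul_one] using hx
  | cons a L ih =>
    rw [redProd_cons, blueProd_cons, (commute_blue_blueProd a L).eq]
    simpa only [mul_assoc] using red_mul_mul_blue_mem_Ftilde a ih

-- The arcs in `K` are those whose blue letter the red letter of `a` has already crossed.
theorem mul_red_mul_blueProd_mem_Ftilde {w : FA} (hw : ∀ x ∈ Ftilde, x * w ∈ Ftilde) (a : Arc)
    (L K : List Arc) :
    redProd K * arcProd L * a.red * blueProd K * w * a.blue ∈ Ftilde := by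
  induction L generalizing K with
  | nil =>
    have hmem : a.red * (redProd K * blueProd K * w) * a.blue ∈ Ftilde :=
      red_mul_mul_blue_mem_Ftilde a (hw _ (arcProd_mem_Ftilde K))
    simpa only [arcProd_nil, mul_one, ← mul_assoc, (commute_red_redProd a K).eq] using hmem
  | cons c L ih =>
    obtain ⟨ε, hε⟩ := c.exists_blue_mul_red_eq a
    have hcrossed :
        redProd K * (c.red * arcProd L * a.red * c.blue * (blueProd K * w) * a.blue) ∈ Ftilde := by
      have h := ih (c :: K)
      rw [redProd_cons, blueProd_cons, (commute_red_redProd c K).eq] at h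
      simpa only [mul_assoc] using h
    have hfused :
        redProd K * ((c.fuse a).red * arcProd L * (blueProd K * w) * (c.fuse a).blue) ∈ Ftilde := by
      have h := red_mul_mul_blue_mem_Ftilde (c.fuse a) (hw _
        (redProd_mul_mul_blueProd_mem_Ftilde K (arcProd_mem_Ftilde L)))
      simpa only [← mul_assoc, (commute_red_redProd (c.fuse a) K).eq] using h
    have hsum := add_mem hcrossed (Ftilde.smul_mem ε hfused)
    rw [← mul_smul_comm, ← mul_add, ← hε] at hsum
    simpa only [arcProd_cons, mul_assoc] using hsum

theorem mul_mem_Ftilde {x y : FA} (hx : x ∈ Ftilde) (hy : y ∈ Ftilde) : x * y ∈ Ftilde := by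
  refine map_mem_of_mem_Ftilde (LinearMap.mulLeft ℂ x) (fun M => ?_) hy
  induction M generalizing x with
  | nil => simpa only [arcProd_nil, LinearMap.mulLeft_apply, mul_one] using hx
  | cons a M ih =>
    refine map_mem_of_mem_Ftilde (LinearMap.mulRight ℂ _) (fun L => ?_) hx
    have h := mul_red_mul_blueProd_mem_Ftilde (fun _ hx => ih hx) a L []
    simpa only [LinearMap.mulRight_apply, arcProd_cons, redProd_nil, blueProd_nil, one_mul, mul_one,
      mul_assoc] using h

end Arcs

section ArcWords

/-- The word `a_{•₁α₁}⋯a_{•ₖαₖ}·a_{α₁◇₁}⋯a_{αₖ◇ₖ}` of a list of arcs. -/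
def arcWord (L : List Arc) : List FLetter :=
  L.map (fun a => .red a.left a.seq) ++ L.map (fun a => .blue a.seq a.right)

theorem mkF_wordProd_arcWord (L : List Arc) : mkF (wordProd (arcWord L)) = arcProd L := by
  rw [arcWord, wordProd_append, map_mul]
  simp only [wordProd, map_list_prod, List.map_map]
  rfl

theorem map_shift_arcWord (m n : ℕ) (L : List Arc) :
    (arcWord L).map (FLetter.shift m n) =
      arcWord (L.map fun a => { a with seq := shiftSeq m n a.seq }) := by
  simp only [arcWord, List.map_append, List.map_map]
  rfl

theorem mkF_starF_arcWord_mem_Ftilde (L M : List Arc) :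
    mkF (starF (wordProd (arcWord L)) (wordProd (arcWord M))) ∈ Ftilde := by
  rw [starF_wordProd_wordProd, map_shift_arcWord, wordProd_append, map_mul, mkF_wordProd_arcWord,
    mkF_wordProd_arcWord]
  exact mul_mem_Ftilde (arcProd_mem_Ftilde _) (arcProd_mem_Ftilde _)

theorem shiftedProduct_mem_Ftilde {mstar : FA →ₗ[ℂ] FA →ₗ[ℂ] FA}
    (hstar : ∀ u v : FreeA, mstar (mkF u) (mkF v) = mkF (starF u v)) {P Q : FA}
    (hP : P ∈ Ftilde) (hQ : Q ∈ Ftilde) : mstar P Q ∈ Ftilde := by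
  refine map_mem_of_mem_Ftilde (mstar P) (fun M => ?_) hQ
  refine map_mem_of_mem_Ftilde (mstar.flip (arcProd M)) (fun L => ?_) hP
  rw [LinearMap.flip_apply, ← mkF_wordProd_arcWord, ← mkF_wordProd_arcWord, hstar]
  exact mkF_starF_arcWord_mem_Ftilde L M

end ArcWords

/-- (1) the ideal 𝒥_F absorbs the shifted product, hence ⋆ induces a
well-defined bilinear product on ℱ = ℂ⟨𝒜⟩/𝒥_F; (2) 𝐹̃ is closed under the induced
shifted product. -/
theorem shifted_product_descends :
    (∀ P ∈ JF, ∀ Q : FreeA, starF P Q ∈ JF ∧ starF Q P ∈ JF) ∧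
    (∃ mstar : FA →ₗ[ℂ] FA →ₗ[ℂ] FA,
      ∀ u v : FreeA, mstar (mkF u) (mkF v) = mkF (starF u v)) ∧
    (∀ mstar : FA →ₗ[ℂ] FA →ₗ[ℂ] FA,
      (∀ u v : FreeA, mstar (mkF u) (mkF v) = mkF (starF u v)) →
      ∀ P ∈ Ftilde, ∀ Q ∈ Ftilde, mstar P Q ∈ Ftilde) :=
  ⟨fun _ hP Q => ⟨starF_mem_JF_of_left hP Q, starF_mem_JF_of_right hP Q⟩,
    exists_shiftedProduct_FA,
    fun _ hstar _ hP _ hQ => shiftedProduct_mem_Ftilde hstar hP hQ⟩
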